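/- Let D be a domain in ℂ and let M be a maximal ideal of H(D). Then ki(M) := ⋂_{n=1}^∞ Mⁿ = {0} if and only if there exists ζ ∈ D such that M = {f ∈ H(D) : f(ζ) = 0}, i.e., M is the (principal, fixed) ideal generated by the function z ↦ z − ζ. -/

import Mathlib

set_option synthInstance.maxHeartbeats 400000
set_option maxHeartbeats 800000

/-- The Krull intersection of an ideal `I`: the intersection `⋂_{n=1}^∞ Iⁿ`. -/
def ki {R : Type*} [CommRing R] (I : Ideal R) : Ideal R :=
  ⨅ (n : ℕ) (_ : 1 ≤ n), I ^ n

/-- The ring `H(D)` of holomorphic functions on a set `D ⊆ ℂ`, realized as the subalgebra of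
`D → ℂ` (with pointwise operations) of functions admitting a holomorphic (complex
differentiable) extension to (an ambient function on) `D`. -/
def Hol (D : Set ℂ) : Subalgebra ℂ (D → ℂ) where
  carrier := {f | ∃ F : ℂ → ℂ, DifferentiableOn ℂ F D ∧ ∀ z : D, F z = f z}
  add_mem' := by
    rintro f g ⟨F, hF, hFf⟩ ⟨G, hG, hGg⟩
    exact ⟨F + G, hF.add hG, fun z => by simp [hFf z, hGg z]⟩
  mul_mem' := by
    rintro f g ⟨F, hF, hFf⟩ ⟨G, hG, hGg⟩
    exact ⟨F * G, hF.mul hG, fun z => by simp [hFf z, hGg z]⟩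
  algebraMap_mem' := fun c => ⟨fun _ => c, differentiableOn_const c, fun _ => rfl⟩

/-- The zero set `Z_D(f) = {z ∈ D : f(z) = 0}` of `f ∈ H(D)`. -/
def ZD {D : Set ℂ} (f : Hol D) : Set D := {z | (f : D → ℂ) z = 0}

/-- `ordGE f ζ n` says that the order (multiplicity) of `ζ` as a zero of `f ∈ H(D)` is at
least `n`, expressed by the (equivalent, for `D` open) divisibility condition that
`(z - ζ)^n` divides `f` in `H(D)`. -/
def ordGE {D : Set ℂ} (f : Hol D) (ζ : D) (n : ℕ) : Prop :=
  ∃ g : Hol D, ∀ z : D, (f : D → ℂ) z = ((z : ℂ) - (ζ : ℂ)) ^ n * (g : D → ℂ) z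

/-!
In `H(D)` divisibility is detected by vanishing orders: `f ∣ g` if and only if
`ord_z f ≤ ord_z g` for all `z ∈ D`.

If `M = (z - ζ)`, an element of `ki M` is divisible by every power of `z - ζ`, so it vanishes to
infinite order at `ζ` and is zero.

If a nonzero prime ideal `P` contains no `z - ζ`, pick `0 ≠ f ∈ P`. Its zeros can be numbered
`ζ₀, ζ₁, …`, and the Weierstrass theorem provides `h ≠ 0` whose order at `ζᵢ` is `i * ord f`. Given
`n`, only finitely many zeros of `f` fail `n * ord f ≤ ord h`; since `P` is prime and contains no
`z - ζ`, dividing `f` by the corresponding linear factors leaves a `q ∈ P` which does not vanish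
there. Then `q ^ n ∣ h`, so `h ∈ P ^ n` for every `n`, and `ki P ≠ 0`.
-/

open Filter Topology Set

section Divisibility

variable {𝕜 : Type*} [NontriviallyNormedField 𝕜] {U : Set 𝕜} {f g : 𝕜 → 𝕜} {z : 𝕜}

theorem meromorphicOrderAt_div_nonneg_of_analyticOrderAt_le (hf : AnalyticAt 𝕜 f z)
    (hg : AnalyticAt 𝕜 g z) (h : analyticOrderAt f z ≤ analyticOrderAt g z) :
    0 ≤ meromorphicOrderAt (g / f) z := by
  rw [meromorphicOrderAt_div hg.meromorphicAt hf.meromorphicAt, hg.meromorphicOrderAt_eq,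
    hf.meromorphicOrderAt_eq]
  generalize analyticOrderAt f z = m at h ⊢
  generalize analyticOrderAt g z = n at h ⊢
  cases n with
  | top => cases m <;> simp 
  | coe n =>
    lift m to ℕ using ne_top_of_le_ne_top (ENat.natCast_ne_top n) h
    rw [Nat.cast_le] at h
    simp only [ENat.map_natCast, ← WithTop.LinearOrderedAddCommGroup.coe_sub]
    exact WithTop.coe_nonneg.2 (sub_nonneg.2 (Int.ofNat_le.2 h))

theorem eventuallyEq_nhdsNE_mul_div_of_analyticOrderAt_le (hf : AnalyticAt 𝕜 f z)
    (h : analyticOrderAt f z ≤ analyticOrderAt g z) : g =ᶠ[𝓝[≠] z] f * (g / f) := by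
  rcases hf.eventually_eq_zero_or_eventually_ne_zero with hf₀ | hf₀
  · have hg₀ : ∀ᶠ w in 𝓝 z, g w = 0 :=
      analyticOrderAt_eq_top.1 (top_le_iff.1 (analyticOrderAt_eq_top.2 hf₀ ▸ h))
    filter_upwards [nhdsWithin_le_nhds hg₀] with w hw
    simp [hw]
  · filter_upwards [hf₀] with w hw
    exact (mul_div_cancel₀ (g w) hw).symm

theorem exists_analyticOnNhd_eqOn_mul_of_analyticOrderAt_le (hf : AnalyticOnNhd 𝕜 f U)
    (hg : AnalyticOnNhd 𝕜 g U) (h : ∀ z ∈ U, analyticOrderAt f z ≤ analyticOrderAt g z) :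
    ∃ q, AnalyticOnNhd 𝕜 q U ∧ EqOn g (f * q) U := by
  have hmer : MeromorphicOn (g / f) U := fun z hz ↦
    (hg z hz).meromorphicAt.div (hf z hz).meromorphicAt
  have hq : AnalyticOnNhd 𝕜 (toMeromorphicNFOn (g / f) U) U := fun z hz ↦ by
    rw [← (meromorphicNFOn_toMeromorphicNFOn _ U hz).meromorphicOrderAt_nonneg_iff_analyticAt,
      meromorphicOrderAt_toMeromorphicNFOn hmer hz]
    exact meromorphicOrderAt_div_nonneg_of_analyticOrderAt_le (hf z hz) (hg z hz) (h z hz)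
  refine ⟨_, hq, fun z hz ↦ ?_⟩
  have hpunctured : g =ᶠ[𝓝[≠] z] f * toMeromorphicNFOn (g / f) U :=
    (eventuallyEq_nhdsNE_mul_div_of_analyticOrderAt_le (hf z hz) (h z hz)).trans
      (EventuallyEq.rfl.mul (hmer.toMeromorphicNFOn_eq_self_on_nhdsNE hz).symm)
  exact (((hg z hz).continuousAt.eventuallyEq_nhds_iff_eventuallyEq_nhdsNE
    ((hf z hz).mul (hq z hz)).continuousAt).1 hpunctured).eq_of_nhds

theorem analyticOrderAt_finsetProd {ι : Type*} {f : ι → 𝕜 → 𝕜} {s : Finset ι}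
    (hf : ∀ i ∈ s, AnalyticAt 𝕜 (f i) z) :
    analyticOrderAt (fun w ↦ ∏ i ∈ s, f i w) z = ∑ i ∈ s, analyticOrderAt (f i) z := by
  classical
  induction s using Finset.induction_on with
  | empty => simpa using (analyticAt_const (v := (1 : 𝕜))).analyticOrderAt_eq_zero.2 one_ne_zero
  | insert i s hi ih =>
    rw [Finset.forall_mem_insert] at hf
    simp only [Finset.prod_insert hi, Finset.sum_insert hi, ← ih hf.2]
    exact analyticOrderAt_mul hf.1 (Finset.analyticAt_fun_prod s hf.2)

end Divisibility

section InfiniteProduct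

variable {D : Set ℂ} {ι : Type*} {F : ι → ℂ → ℂ} {c : ι → ℝ}

theorem summable_norm_of_eventually_norm_le (hc : Summable c)
    (hb : ∀ K ⊆ D, IsCompact K → ∀ᶠ i in cofinite, ∀ z ∈ K, ‖F i z‖ ≤ c i) {z : ℂ} (hz : z ∈ D) :
    Summable fun i ↦ ‖F i z‖ := by
  refine hc.of_norm_bounded_eventually ?_
  filter_upwards [hb {z} (singleton_subset_iff.2 hz) isCompact_singleton] with i hi
  simpa using hi z rfl

theorem differentiableOn_tprod_one_add (hD : IsOpen D) (hc : Summable c)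
    (hF : ∀ i, DifferentiableOn ℂ (F i) D)
    (hb : ∀ K ⊆ D, IsCompact K → ∀ᶠ i in cofinite, ∀ z ∈ K, ‖F i z‖ ≤ c i) :
    DifferentiableOn ℂ (fun z ↦ ∏' i, (1 + F i z)) D := by
  have hprod : HasProdLocallyUniformlyOn (fun i z ↦ 1 + F i z) (fun z ↦ ∏' i, (1 + F i z)) D :=
    hasProdLocallyUniformlyOn_of_forall_compact hD fun K hKD hK ↦
      Summable.hasProdUniformlyOn_one_add hK hc (hb K hKD hK)
        fun i ↦ ((hF i).mono hKD).continuousOn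
  refine (hasProdLocallyUniformlyOn_iff_tendstoLocallyUniformlyOn.1 hprod).differentiableOn
    (Eventually.of_forall fun s ↦ ?_) hD
  exact DifferentiableOn.fun_finsetProd fun i _ ↦ (differentiableOn_const 1).add (hF i)

theorem tprod_one_add_eq_prod_mul_tprod_compl {R : Type*} [NormedCommRing R] [NormOneClass R]
    [CompleteSpace R] {f : ι → R} (hf : Summable fun i ↦ ‖f i‖) (s : Finset ι) :
    ∏' i, (1 + f i) = (∏ i ∈ s, (1 + f i)) * ∏' i : ↥((s : Set ι)ᶜ), (1 + f i) := by
  have hmul (t : Set ι) : Multipliable fun i : t ↦ 1 + f i :=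
    multipliable_one_add_of_summable (hf.comp_injective Subtype.val_injective)
  rw [← Finset.tprod_subtype' s fun i ↦ 1 + f i]
  exact (Multipliable.tprod_mul_tprod_compl (f := fun i ↦ 1 + f i) (hmul s) (hmul _)).symm

theorem analyticOrderAt_tprod_one_add (hD : IsOpen D) (hc : Summable c)
    (hF : ∀ i, DifferentiableOn ℂ (F i) D)
    (hb : ∀ K ⊆ D, IsCompact K → ∀ᶠ i in cofinite, ∀ z ∈ K, ‖F i z‖ ≤ c i)
    {z : ℂ} (hz : z ∈ D) {s : Finset ι} (hs : ∀ i ∉ s, 1 + F i z ≠ 0) :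
    analyticOrderAt (fun w ↦ ∏' i, (1 + F i w)) z
      = ∑ i ∈ s, analyticOrderAt (fun w ↦ 1 + F i w) z := by
  have hDz : D ∈ 𝓝 z := hD.mem_nhds hz
  have hfactor (i : ι) : AnalyticAt ℂ (fun w ↦ 1 + F i w) z :=
    analyticAt_const.add ((hF i).analyticAt hDz)
  let tail (w : ℂ) : ℂ := ∏' i : ↥((s : Set ι)ᶜ), (1 + F i w)
  have htail : AnalyticAt ℂ tail z := by
    refine (differentiableOn_tprod_one_add hD (hc.subtype (s : Set ι)ᶜ) (fun i ↦ hF i)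
      fun K hKD hK ↦ ?_).analyticAt hDz
    exact Subtype.val_injective.tendsto_cofinite.eventually (hb K hKD hK)
  have htail₀ : analyticOrderAt tail z = 0 :=
    htail.analyticOrderAt_eq_zero.2 <| tprod_one_add_ne_zero_of_summable (fun i ↦ hs i i.2)
      ((summable_norm_of_eventually_norm_le hc hb hz).subtype _)
  have hsplit : (fun w ↦ ∏' i, (1 + F i w)) =ᶠ[𝓝 z] (fun w ↦ ∏ i ∈ s, (1 + F i w)) * tail := by
    filter_upwards [hDz] with w hw
    exact tprod_one_add_eq_prod_mul_tprod_compl (summable_norm_of_eventually_norm_le hc hb hw) s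
  rw [analyticOrderAt_congr hsplit,
    analyticOrderAt_mul (Finset.analyticAt_fun_prod s fun i _ ↦ hfactor i) htail, htail₀, add_zero,
    analyticOrderAt_finsetProd fun i _ ↦ hfactor i]

end InfiniteProduct

section WeierstrassFactor

/-- The Weierstrass elementary factor `E_p(w) = (1 - w) exp(w + w² / 2 + ⋯ + w ^ p / p)`; the
exponent is written through the Taylor polynomial of `log (1 + ·)` at `-w`. -/
noncomputable def weierstrassFactor (p : ℕ) (w : ℂ) : ℂ :=
  (1 - w) * Complex.exp (-Complex.logTaylor (p + 1) (-w))

theorem differentiable_weierstrassFactor (p : ℕ) : Differentiable ℂ (weierstrassFactor p) := by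
  have hlog : Differentiable ℂ (Complex.logTaylor (p + 1)) := fun z ↦
    (Complex.hasDerivAt_logTaylor p z).differentiableAt
  unfold weierstrassFactor
  fun_prop

theorem weierstrassFactor_eq_zero_iff {p : ℕ} {w : ℂ} : weierstrassFactor p w = 0 ↔ w = 1 := by
  rw [weierstrassFactor, mul_eq_zero, or_iff_left (Complex.exp_ne_zero _), sub_eq_zero, eq_comm]

theorem norm_weierstrassFactor_sub_one_le (p : ℕ) {w : ℂ} (hw : ‖w‖ ≤ 1 / 2) :
    ‖weierstrassFactor p w - 1‖ ≤ 4 * ‖w‖ ^ (p + 1) := by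
  have hw₁ : ‖-w‖ < 1 := by rw [norm_neg]; linarith
  have hne : 1 + -w ≠ 0 := by
    rw [← sub_eq_add_neg, sub_ne_zero]
    rintro rfl
    norm_num at hw
  have hexp : weierstrassFactor p w
      = Complex.exp (Complex.log (1 + -w) - Complex.logTaylor (p + 1) (-w)) := by
    rw [sub_eq_add_neg, Complex.exp_add, Complex.exp_log hne, ← sub_eq_add_neg, weierstrassFactor]
  have hinv : (1 - ‖w‖)⁻¹ ≤ 2 := inv_le_of_inv_le₀ two_pos (by linarith)
  have hlog : ‖Complex.log (1 + -w) - Complex.logTaylor (p + 1) (-w)‖ ≤ 2 * ‖w‖ ^ (p + 1) := by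
    calc _ ≤ ‖-w‖ ^ (p + 1) * (1 - ‖-w‖)⁻¹ / (p + 1) := Complex.norm_log_sub_logTaylor_le p hw₁
      _ ≤ ‖w‖ ^ (p + 1) * (1 - ‖w‖)⁻¹ := by
        rw [norm_neg]
        exact div_le_self (mul_nonneg (by positivity) (inv_nonneg.2 (by linarith))) (by simp)
      _ ≤ 2 * ‖w‖ ^ (p + 1) := by
        rw [mul_comm]
        gcongr
  have hpow : ‖w‖ ^ (p + 1) ≤ 1 / 2 :=
    (pow_le_of_le_one (norm_nonneg w) (by linarith) p.succ_ne_zero).trans hw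
  rw [hexp]
  linarith [Complex.norm_exp_sub_one_le (hlog.trans (by linarith))]

theorem analyticOrderAt_weierstrassFactor_one_sub {p : ℕ} {c : ℂ → ℂ} {a z : ℂ}
    (hc : AnalyticAt ℂ c z) (hcz : c z ≠ 0) :
    analyticOrderAt (fun w ↦ weierstrassFactor p (1 - (w - a) * c w)) z
      = if z = a then 1 else 0 := by
  have hsub : AnalyticAt ℂ (fun w ↦ w - a) z := by fun_prop
  split_ifs with hza
  · subst hza
    have hexp : AnalyticAt ℂ
        (fun w ↦ c w * Complex.exp (-Complex.logTaylor (p + 1) (-(1 - (w - z) * c w)))) z := by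
      have hlog : AnalyticAt ℂ (Complex.logTaylor (p + 1)) (-(1 - (z - z) * c z)) :=
        Differentiable.analyticAt
          (fun w ↦ (Complex.hasDerivAt_logTaylor p w).differentiableAt) _
      fun_prop
    have hfactor : (fun w ↦ weierstrassFactor p (1 - (w - z) * c w)) = (fun w ↦ w - z)
        * fun w ↦ c w * Complex.exp (-Complex.logTaylor (p + 1) (-(1 - (w - z) * c w))) := by
      ext w
      simp only [weierstrassFactor, Pi.mul_apply]
      ring
    rw [hfactor, analyticOrderAt_mul hsub hexp, analyticOrderAt_id_sub_const_self,
      hexp.analyticOrderAt_eq_zero.2 (mul_ne_zero hcz (Complex.exp_ne_zero _)), add_zero]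
  · have hE : AnalyticAt ℂ (weierstrassFactor p) (1 - (z - a) * c z) :=
      (differentiable_weierstrassFactor p).analyticAt _
    refine AnalyticAt.analyticOrderAt_eq_zero (by fun_prop) |>.2 ?_
    simp [weierstrassFactor_eq_zero_iff, sub_eq_zero, hza, hcz]

end WeierstrassFactor

section Cocompact

theorem eventually_cocompact_dist_lt_or_lt_dist {X : Type*} [PseudoMetricSpace X] [ProperSpace X]
    (s : Set X) (x₀ : X) {ε : ℝ} (hε : 0 < ε) (R : ℝ) :
    ∀ᶠ a : s in cocompact s, (∃ b ∉ s, dist (a : X) b < ε) ∨ R < dist (a : X) x₀ := by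
  let K : Set X := Metric.closedBall x₀ R ∩ ⋂ b ∈ sᶜ, {a | ε ≤ dist a b}
  have hK : IsCompact K := (isCompact_closedBall x₀ R).inter_right <|
    isClosed_biInter fun b _ ↦ isClosed_le continuous_const (continuous_id.dist continuous_const)
  have hKs : K ⊆ s := fun a ha ↦ by
    by_contra has
    exact hε.not_ge ((mem_iInter₂.1 ha.2 a has).trans_eq (dist_self a))
  have hpre : IsCompact (Subtype.val ⁻¹' K : Set s) :=
    IsInducing.subtypeVal.isCompact_preimage' hK (by simpa using hKs)
  filter_upwards [hpre.compl_mem_cocompact] with a ha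
  contrapose! ha
  rw [notMem_compl_iff]
  exact ⟨Metric.mem_closedBall.2 ha.2, mem_iInter₂.2 ha.1⟩

theorem countable_of_tendsto_cofinite_cocompact {X ι : Type*} [TopologicalSpace X]
    [SigmaCompactSpace X] {a : ι → X} (ha : Tendsto a cofinite (cocompact X)) : Countable ι := by
  rw [← Set.countable_univ_iff, ← preimage_univ (f := a), ← iUnion_compactCovering X,
    preimage_iUnion]
  exact countable_iUnion fun n ↦
    (tendsto_cofinite_cocompact_iff.1 ha _ (isCompact_compactCovering X n)).countable

end Cocompact

section Concentration

theorem norm_one_sub_mul_inv_sub_le {𝕜 : Type*} [NormedField 𝕜] {a b z : 𝕜} {C : ℝ}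
    (hC : 1 ≤ C * dist z b) :
    ‖1 - (z - a) * (z - b)⁻¹‖ ≤ dist a b * C := by
  have hzb : z - b ≠ 0 := fun h ↦ by simp [dist_eq_norm, h, one_pos.not_ge] at hC
  have hquot : 1 - (z - a) * (z - b)⁻¹ = (a - b) / (z - b) := by
    field_simp
    ring
  rw [hquot, norm_div, ← dist_eq_norm, ← dist_eq_norm, div_le_iff₀ (dist_pos.2 (sub_ne_zero.1 hzb)),
    mul_assoc]
  exact le_mul_of_one_le_right dist_nonneg hC

theorem norm_one_sub_mul_neg_inv_le {𝕜 : Type*} [NormedField 𝕜] {a z : 𝕜} {C : ℝ} (ha : a ≠ 0)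
    (hz : ‖z‖ ≤ C) :
    ‖1 - (z - a) * -a⁻¹‖ ≤ ‖a‖⁻¹ * C := by
  have hquot : 1 - (z - a) * -a⁻¹ = a⁻¹ * z := by
    field_simp
    ring
  rw [hquot, norm_mul, norm_inv]
  gcongr

theorem exists_bound_norm_and_dist_compl {E : Type*} [SeminormedAddCommGroup E] {D K : Set E}
    (hD : IsOpen D) (hK : IsCompact K) (hKD : K ⊆ D) :
    ∃ C > 0, ∀ z ∈ K, ‖z‖ ≤ C ∧ ∀ b ∉ D, 1 ≤ C * dist z b := by
  obtain ⟨δ, hδ, hthick⟩ := hK.exists_thickening_subset_open hD hKD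
  obtain ⟨B, hB⟩ := hK.isBounded.exists_norm_le
  refine ⟨max B δ⁻¹, lt_max_of_lt_right (inv_pos.2 hδ), fun z hz ↦
    ⟨(hB z hz).trans (le_max_left _ _), fun b hb ↦ ?_⟩⟩
  have hδb : δ ≤ dist z b := by
    by_contra! hlt
    exact hb (hthick (Metric.mem_thickening_iff.2 ⟨z, hz, dist_comm z b ▸ hlt⟩))
  calc 1 = δ⁻¹ * δ := (inv_mul_cancel₀ hδ.ne').symm
    _ ≤ max B δ⁻¹ * dist z b := by
      gcongr
      exact le_max_right _ _

variable {𝕜 : Type*} [NontriviallyNormedField 𝕜] [ProperSpace 𝕜] {D : Set 𝕜}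

-- If some `b ∉ D` lies closer to `a` than `‖a‖⁻¹`, then `c z = (z - b)⁻¹` for a nearest such `b`
-- gives `1 - (z - a) * c z = (a - b) / (z - b)`; otherwise `c = -a⁻¹` gives `z / a`.
theorem exists_differentiableOn_norm_one_sub_mul_le (hD : IsOpen D) (a : 𝕜) :
    ∃ c : 𝕜 → 𝕜, DifferentiableOn 𝕜 c D ∧ (∀ z ∈ D, c z ≠ 0) ∧ ∀ ε > 0,
      ((∃ b ∉ D, dist a b < ε) ∨ ε⁻¹ < ‖a‖) → ∀ C, ∀ z ∈ D, ‖z‖ ≤ C →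
        (∀ b ∉ D, 1 ≤ C * dist z b) → ‖1 - (z - a) * c z‖ ≤ ε * C := by
  by_cases hnear : ∃ b ∉ D, dist a b * ‖a‖ < 1
  · obtain ⟨b, hb, hba⟩ := hnear
    obtain ⟨b₀, hb₀, hmin⟩ := hD.isClosed_compl.exists_infDist_eq_dist ⟨b, hb⟩ a
    have hle {b : 𝕜} (hb : b ∉ D) : dist a b₀ ≤ dist a b := hmin ▸ Metric.infDist_le_dist_of_mem hb
    have hne (z : 𝕜) (hz : z ∈ D) : z - b₀ ≠ 0 := sub_ne_zero.2 (ne_of_mem_of_not_mem hz hb₀)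
    refine ⟨fun z ↦ (z - b₀)⁻¹, fun z hz ↦ ?_, fun z hz ↦ inv_ne_zero (hne z hz),
      fun ε hε hclose C z _ hzC hC ↦ (norm_one_sub_mul_inv_sub_le (hC b₀ hb₀)).trans ?_⟩
    · exact ((differentiableAt_id.sub_const b₀).inv (hne z hz)).differentiableWithinAt
    · refine mul_le_mul_of_nonneg_right ?_ ((norm_nonneg z).trans hzC)
      rcases hclose with ⟨b', hb', hab'⟩ | hfar
      · exact (hle hb').trans hab'.le
      · have ha : 0 < ‖a‖ := (inv_pos.2 hε).trans hfar
        calc dist a b₀ ≤ dist a b := hle hb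
          _ ≤ ‖a‖⁻¹ := ((lt_div_iff₀ ha).2 hba).le.trans_eq (one_div _)
          _ ≤ ε := inv_le_of_inv_le₀ hε hfar.le
  · push Not at hnear
    rcases eq_or_ne a 0 with rfl | ha
    · have hmem (b : 𝕜) : b ∈ D := by
        by_contra hb
        simpa [one_pos.not_ge] using hnear b hb
      refine ⟨1, differentiableOn_const 1, fun _ _ ↦ one_ne_zero, fun ε hε hclose ↦ ?_⟩
      rcases hclose with ⟨b, hb, -⟩ | hfar
      · exact absurd (hmem b) hb
      · exact absurd hfar (by simpa using hε.le)
    · refine ⟨fun _ ↦ -a⁻¹, differentiableOn_const _, fun _ _ ↦ neg_ne_zero.2 (inv_ne_zero ha),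
        fun ε hε hclose C z _ hzC _ ↦ (norm_one_sub_mul_neg_inv_le ha hzC).trans ?_⟩
      refine mul_le_mul_of_nonneg_right (inv_le_of_inv_le₀ hε ?_) ((norm_nonneg z).trans hzC)
      rcases hclose with ⟨b, hb, hab⟩ | hfar
      · rw [inv_le_iff_one_le_mul₀' hε]
        exact (hnear b hb).trans (by gcongr)
      · exact hfar.le

theorem exists_tendstoLocallyUniformlyOn_one_sub_mul (hD : IsOpen D) :
    ∃ c : D → 𝕜 → 𝕜, (∀ a, DifferentiableOn 𝕜 (c a) D) ∧ (∀ a, ∀ z ∈ D, c a z ≠ 0) ∧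
      TendstoLocallyUniformlyOn (fun (a : D) z ↦ 1 - (z - a) * c a z) 0 (cocompact D) D := by
  choose c hc hc₀ hsmall using fun a : D ↦ exists_differentiableOn_norm_one_sub_mul_le hD (a : 𝕜)
  refine ⟨c, hc, hc₀, (tendstoLocallyUniformlyOn_iff_forall_isCompact hD).2 fun K hKD hK ↦ ?_⟩
  obtain ⟨C, hC, hKC⟩ := exists_bound_norm_and_dist_compl hD hK hKD
  refine Metric.tendstoUniformlyOn_iff.2 fun ε hε ↦ ?_
  have hε' : 0 < ε / (2 * C) := by positivity
  filter_upwards [eventually_cocompact_dist_lt_or_lt_dist D 0 hε' (ε / (2 * C))⁻¹] with a ha z hz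
  rw [dist_zero_right] at ha
  calc dist 0 (1 - (z - a) * c a z) ≤ ε / (2 * C) * C := by
        rw [dist_zero_left]
        exact hsmall a _ hε' ha C z (hKD hz) (hKC z hz).1 (hKC z hz).2
    _ = ε / 2 := by field_simp
    _ < ε := half_lt_self hε

end Concentration

section Weierstrass

variable {D : Set ℂ}

theorem eventually_norm_weierstrassFactor_sub_one_le {ι : Type*} {l : Filter ι} {u : ι → ℂ → ℂ}
    {K : Set ℂ} (hu : TendstoUniformlyOn u 0 l K) (p : ι → ℕ) :
    ∀ᶠ i in l, ∀ z ∈ K, ‖weierstrassFactor (p i) (u i z) - 1‖ ≤ 4 * (1 / 2 : ℝ) ^ (p i + 1) := by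
  filter_upwards [Metric.tendstoUniformlyOn_iff.1 hu (1 / 2) one_half_pos] with i hi z hz
  have hle : ‖u i z‖ ≤ 1 / 2 := by simpa using (hi z hz).le
  exact (norm_weierstrassFactor_sub_one_le (p i) hle).trans (by gcongr)

theorem exists_differentiableOn_analyticOrderAt_eq_encard_preimage (hD : IsOpen D) {ι : Type*}
    {a : ι → D} (ha : Tendsto a cofinite (cocompact D)) :
    ∃ h : ℂ → ℂ, DifferentiableOn ℂ h D ∧ ∀ z : D, analyticOrderAt h z = (a ⁻¹' {z}).encard := by
  have : LocallyCompactSpace D := hD.locallyCompactSpace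
  have : Countable ι := countable_of_tendsto_cofinite_cocompact ha
  obtain ⟨p, hp⟩ := exists_injective_nat ι
  obtain ⟨c, hc, hc₀, hlim⟩ := exists_tendstoLocallyUniformlyOn_one_sub_mul hD
  let F (i : ι) (z : ℂ) : ℂ := weierstrassFactor (p i) (1 - (z - a i) * c (a i) z) - 1
  have hF (i : ι) : DifferentiableOn ℂ (F i) D :=
    ((differentiable_weierstrassFactor (p i)).comp_differentiableOn <|
      (differentiableOn_const 1).sub <|
        (differentiableOn_id.sub_const (a i : ℂ)).mul (hc (a i))).sub_const 1
  have hsum : Summable fun i ↦ 4 * (1 / 2 : ℝ) ^ (p i + 1) :=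
    (((summable_nat_add_iff 1).2 summable_geometric_two).comp_injective hp).mul_left 4
  have hb (K : Set ℂ) (hKD : K ⊆ D) (hK : IsCompact K) :
      ∀ᶠ i in cofinite, ∀ z ∈ K, ‖F i z‖ ≤ 4 * (1 / 2 : ℝ) ^ (p i + 1) :=
    eventually_norm_weierstrassFactor_sub_one_le (fun v hv ↦ ha.eventually <|
      (tendstoLocallyUniformlyOn_iff_forall_isCompact hD).1 hlim K hKD hK v hv) p
  refine ⟨fun z ↦ ∏' i, (1 + F i z), differentiableOn_tprod_one_add hD hsum hF hb, fun z ↦ ?_⟩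
  have hfiber : (a ⁻¹' {z}).Finite := tendsto_cofinite_cocompact_iff.1 ha {z} isCompact_singleton
  have hne (i : ι) (hi : i ∉ hfiber.toFinset) : 1 + F i z ≠ 0 := by
    have hza : z ≠ a i := fun h ↦ hi (by simp [h])
    simpa [F, weierstrassFactor_eq_zero_iff, sub_eq_zero, hc₀ (a i) z z.2] using
      Subtype.coe_injective.ne hza
  have horder (i : ι) (hi : i ∈ hfiber.toFinset) : analyticOrderAt (fun w ↦ 1 + F i w) z = 1 := by
    have hza : (z : ℂ) = a i := congrArg Subtype.val (hfiber.mem_toFinset.1 hi).symm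
    simp only [F, add_sub_cancel]
    rw [analyticOrderAt_weierstrassFactor_one_sub ((hc (a i)).analyticAt (hD.mem_nhds z.2))
      (hc₀ (a i) z z.2), if_pos hza]
  rw [analyticOrderAt_tprod_one_add hD hsum hF hb z.2 hne, Finset.sum_congr rfl horder,
    hfiber.encard_eq_coe_toFinset_card, Finset.sum_const, nsmul_one]

theorem exists_differentiableOn_analyticOrderAt_eq (hD : IsOpen D) {k : D → ℕ}
    (hk : k =ᶠ[codiscrete D] 0) :
    ∃ h : ℂ → ℂ, DifferentiableOn ℂ h D ∧ ∀ z : D, analyticOrderAt h z = k z := by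
  obtain ⟨hopen, hdiscrete⟩ := mem_codiscrete'.1 hk
  have htendsto : Tendsto (Sigma.fst : (Σ z : D, Fin (k z)) → D) cofinite (cocompact D) := by
    refine tendsto_cofinite_cocompact_iff.2 fun K hK ↦ ?_
    have hfin : (K ∩ {z | k z = 0}ᶜ).Finite :=
      (hK.inter_right hopen.isClosed_compl).finite (hdiscrete.mono inter_subset_right)
    refine (hfin.preimage' (f := Sigma.fst) fun z _ ↦ ?_).subset fun x hx ↦
      ⟨hx, fun hx₀ : k x.1 = 0 ↦ (Fin.cast hx₀ x.2).elim0⟩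
    rw [← range_sigmaMk]
    exact finite_range _
  obtain ⟨h, hh, horder⟩ := exists_differentiableOn_analyticOrderAt_eq_encard_preimage hD htendsto
  refine ⟨h, hh, fun z ↦ ?_⟩
  rw [horder, ← range_sigmaMk, ← image_univ, sigma_mk_injective.encard_image]
  simp

end Weierstrass

section KrullIntersection

variable {R : Type*} [CommRing R]

theorem mem_ki {I : Ideal R} {x : R} : x ∈ ki I ↔ ∀ n : ℕ, x ∈ I ^ n := by
  simp only [ki, Submodule.mem_iInf]
  refine ⟨fun h n ↦ ?_, fun h n _ ↦ h n⟩
  rcases n.eq_zero_or_pos with rfl | hn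
  · simp
  · exact h n hn

theorem mem_ki_span_singleton {a x : R} : x ∈ ki (Ideal.span {a}) ↔ ∀ n : ℕ, a ^ n ∣ x := by
  simp only [mem_ki, Ideal.span_singleton_pow, Ideal.mem_span_singleton]

end KrullIntersection

namespace Hol

variable {D : Set ℂ}

/-- The element of `H(D)` given by a function on `ℂ` that is holomorphic on `D`. -/
def ofDifferentiableOn (F : ℂ → ℂ) (hF : DifferentiableOn ℂ F D) : Hol D :=
  ⟨fun z ↦ F z, F, hF, fun _ ↦ rfl⟩

/-- The function `z ↦ z - ζ`, as an element of `H(D)`. -/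
def linear (ζ : D) : Hol D :=
  ofDifferentiableOn (fun z ↦ z - ζ) (differentiableOn_id.sub_const _)

/-- The extension of `f ∈ H(D)` to `ℂ` by zero; only its values near points of `D` matter when `D`
is open. -/
noncomputable def zeroExtend (f : Hol D) : ℂ → ℂ :=
  Function.extend Subtype.val (f : D → ℂ) 0

/-- The order of vanishing of `f ∈ H(D)` at a point; it is `⊤` where `f` vanishes locally. -/
noncomputable def order (f : Hol D) (z : D) : ℕ∞ :=
  analyticOrderAt (zeroExtend f) z

theorem zeroExtend_apply (f : Hol D) (z : D) : zeroExtend f z = (f : D → ℂ) z :=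
  Subtype.val_injective.extend_apply _ _ z

theorem zeroExtend_mul (f g : Hol D) : zeroExtend (f * g) = zeroExtend f * zeroExtend g := by
  rw [zeroExtend, zeroExtend, zeroExtend, ← Function.extend_mul, mul_zero, MulMemClass.coe_mul]

theorem eqOn_zeroExtend_ofDifferentiableOn {F : ℂ → ℂ} (hF : DifferentiableOn ℂ F D) :
    EqOn (zeroExtend (ofDifferentiableOn F hF)) F D :=
  fun z hz ↦ zeroExtend_apply _ ⟨z, hz⟩

theorem differentiableOn_zeroExtend (f : Hol D) : DifferentiableOn ℂ (zeroExtend f) D := by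
  obtain ⟨F, hF, hFf⟩ := f.2
  exact hF.congr fun z hz ↦ (zeroExtend_apply f ⟨z, hz⟩).trans (hFf ⟨z, hz⟩).symm

theorem analyticOnNhd_zeroExtend (hD : IsOpen D) (f : Hol D) :
    AnalyticOnNhd ℂ (zeroExtend f) D :=
  (differentiableOn_zeroExtend f).analyticOnNhd hD

section Order

theorem order_ofDifferentiableOn (hD : IsOpen D) {F : ℂ → ℂ} (hF : DifferentiableOn ℂ F D) (z : D) :
    order (ofDifferentiableOn F hF) z = analyticOrderAt F z :=
  analyticOrderAt_congr <|
    (eqOn_zeroExtend_ofDifferentiableOn hF).eventuallyEq_of_mem (hD.mem_nhds z.2)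

theorem order_eq_zero_iff (hD : IsOpen D) {f : Hol D} {z : D} :
    order f z = 0 ↔ (f : D → ℂ) z ≠ 0 := by
  rw [order, (analyticOnNhd_zeroExtend hD f z z.2).analyticOrderAt_eq_zero, zeroExtend_apply]

theorem order_mul (hD : IsOpen D) (f g : Hol D) (z : D) :
    order (f * g) z = order f z + order g z := by
  rw [order, zeroExtend_mul]
  exact analyticOrderAt_mul (analyticOnNhd_zeroExtend hD f z z.2)
    (analyticOnNhd_zeroExtend hD g z z.2)

theorem order_pow (hD : IsOpen D) (f : Hol D) (n : ℕ) (z : D) :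
    order (f ^ n) z = n * order f z := by
  induction n with
  | zero => simpa using (order_eq_zero_iff hD).2 one_ne_zero
  | succ n ih => rw [pow_succ, order_mul hD, ih, Nat.cast_succ, add_one_mul]

theorem order_linear_self (hD : IsOpen D) (ζ : D) : order (linear ζ) ζ = 1 := by
  rw [linear, order_ofDifferentiableOn hD, analyticOrderAt_id_sub_const_self]

theorem order_linear_of_ne (hD : IsOpen D) {ζ z : D} (h : z ≠ ζ) : order (linear ζ) z = 0 :=
  (order_eq_zero_iff hD).2 <| sub_ne_zero.2 <| Subtype.val_injective.ne h

theorem order_eq_top_iff (hD : IsOpen D) (hconn : IsPreconnected D) {f : Hol D} {z : D} :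
    order f z = ⊤ ↔ f = 0 := by
  refine ⟨fun h ↦ ?_, ?_⟩
  · have heq := (analyticOnNhd_zeroExtend hD f).eqOn_zero_of_preconnected_of_eventuallyEq_zero hconn
      z.2 (analyticOrderAt_eq_top.1 h)
    ext w
    exact (zeroExtend_apply f w).symm.trans (heq w.2)
  · rintro rfl
    rw [order, analyticOrderAt_eq_top]
    filter_upwards [hD.mem_nhds z.2] with w hw
    exact zeroExtend_apply 0 ⟨w, hw⟩

theorem dvd_iff_forall_order_le (hD : IsOpen D) {f g : Hol D} :
    f ∣ g ↔ ∀ z, order f z ≤ order g z := by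
  refine ⟨?_, fun h ↦ ?_⟩
  · rintro ⟨q, rfl⟩ z
    rw [order_mul hD]
    exact le_self_add
  · obtain ⟨q, hq, heq⟩ := exists_analyticOnNhd_eqOn_mul_of_analyticOrderAt_le
      (analyticOnNhd_zeroExtend hD f) (analyticOnNhd_zeroExtend hD g) fun z hz ↦ h ⟨z, hz⟩
    refine ⟨ofDifferentiableOn q hq.differentiableOn, Subtype.ext <| funext fun z ↦ ?_⟩
    rw [← zeroExtend_apply, heq z.2, Pi.mul_apply, zeroExtend_apply]
    rfl

theorem eventually_codiscrete_order_eq_zero (hD : IsOpen D) (hconn : IsPreconnected D) {f : Hol D}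
    (hf : f ≠ 0) : ∀ᶠ z in codiscrete D, order f z = 0 := by
  have han := analyticOnNhd_zeroExtend hD f
  filter_upwards [han.codiscrete_setOfPred_analyticOrderAt_eq_zero_or_top] with z hz
  exact hz.resolve_right fun h ↦ hf ((order_eq_top_iff hD hconn).1 h)

theorem exists_order_eq (hD : IsOpen D) {k : D → ℕ} (hk : k =ᶠ[codiscrete D] 0) :
    ∃ h : Hol D, ∀ z, order h z = k z := by
  obtain ⟨h, hh, horder⟩ := exists_differentiableOn_analyticOrderAt_eq hD hk
  exact ⟨ofDifferentiableOn h hh, fun z ↦ (order_ofDifferentiableOn hD hh z).trans (horder z)⟩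

end Order

section Linear

theorem linear_dvd_iff (hD : IsOpen D) {ζ : D} {f : Hol D} :
    linear ζ ∣ f ↔ (f : D → ℂ) ζ = 0 := by
  rw [dvd_iff_forall_order_le hD]
  refine ⟨fun h ↦ ?_, fun h z ↦ ?_⟩
  · by_contra hne
    simpa [order_linear_self hD, (order_eq_zero_iff hD).2 hne] using h ζ
  · rcases eq_or_ne z ζ with rfl | hz
    · rw [order_linear_self hD, Order.one_le_iff_ne_zero, ne_eq, order_eq_zero_iff hD, not_not, h]
    · rw [order_linear_of_ne hD hz]
      exact zero_le

theorem exists_eq_linear_pow_mul (hD : IsOpen D) (hconn : IsPreconnected D) {f : Hol D}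
    (hf : f ≠ 0) (ζ : D) :
    ∃ (n : ℕ) (q : Hol D), f = linear ζ ^ n * q ∧ (q : D → ℂ) ζ ≠ 0 := by
  obtain ⟨n, hn⟩ := ENat.ne_top_iff_exists.1 (mt (order_eq_top_iff hD hconn).1 hf : order f ζ ≠ ⊤)
  have hdvd : linear ζ ^ n ∣ f := (dvd_iff_forall_order_le hD).2 fun z ↦ by
    rw [order_pow hD]
    rcases eq_or_ne z ζ with rfl | hz
    · rw [order_linear_self hD, mul_one, hn]
    · simp [order_linear_of_ne hD hz]
  obtain ⟨q, rfl⟩ := hdvd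
  refine ⟨n, q, rfl, (order_eq_zero_iff hD).1 ?_⟩
  rw [order_mul hD, order_pow hD, order_linear_self hD, mul_one] at hn
  exact (ENat.add_right_injective_of_ne_top (ENat.natCast_ne_top n) (by simpa using hn)).symm

theorem ki_span_linear (hD : IsOpen D) (hconn : IsPreconnected D) (ζ : D) :
    ki (Ideal.span {linear ζ}) = ⊥ := by
  refine (Submodule.eq_bot_iff _).2 fun f hf ↦ (order_eq_top_iff hD hconn (z := ζ)).1 ?_
  refine ENat.eq_top_iff_forall_ge.2 fun n ↦ ?_
  calc (n : ℕ∞) = order (linear ζ ^ n) ζ := by rw [order_pow hD, order_linear_self hD, mul_one]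
    _ ≤ order f ζ := (dvd_iff_forall_order_le hD).1 (mem_ki_span_singleton.1 hf n) ζ

theorem mem_iff_apply_eq_zero_of_linear_mem (hD : IsOpen D) {I : Ideal (Hol D)} (hI : I ≠ ⊤) {ζ : D}
    (hζ : linear ζ ∈ I) (f : Hol D) : f ∈ I ↔ (f : D → ℂ) ζ = 0 := by
  refine ⟨fun hf ↦ ?_, fun hf ↦ I.mem_of_dvd ((linear_dvd_iff hD).2 hf) hζ⟩
  by_contra hne
  have hsub : f - algebraMap ℂ (Hol D) ((f : D → ℂ) ζ) ∈ I :=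
    I.mem_of_dvd ((linear_dvd_iff hD).2 (sub_self _)) hζ
  have hunit : IsUnit (algebraMap ℂ (Hol D) ((f : D → ℂ) ζ)) :=
    (isUnit_iff_ne_zero.2 hne).map _
  exact hI (I.eq_top_of_isUnit_mem ((I.sub_mem_iff_right hf).1 hsub) hunit)

theorem linear_ne_zero (hD : IsOpen D) (hconn : IsPreconnected D) (ζ : D) : linear ζ ≠ 0 := by
  intro h
  simpa [order_linear_self hD] using (order_eq_top_iff hD hconn (z := ζ)).2 h

theorem ne_bot_of_isMaximal (hD : IsOpen D) (hconn : IsConnected D) {M : Ideal (Hol D)}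
    (hM : M.IsMaximal) : M ≠ ⊥ := by
  rintro rfl
  obtain ⟨ζ⟩ := hconn.nonempty.to_subtype
  have hspan : Ideal.span {linear ζ} ≠ ⊤ := fun h ↦
    one_ne_zero ((linear_dvd_iff hD (f := 1)).1 (Ideal.span_singleton_eq_top.1 h).dvd)
  exact linear_ne_zero hD hconn.isPreconnected ζ
    (Ideal.span_singleton_eq_bot.1 (hM.eq_of_le hspan bot_le).symm)

end Linear

section Free

theorem exists_ne_zero_finite_order_lt_mul (hD : IsOpen D) (hconn : IsPreconnected D) {f : Hol D}
    (hf : f ≠ 0) : ∃ h : Hol D, h ≠ 0 ∧ ∀ n : ℕ, {z | order h z < n * order f z}.Finite := by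
  have hzero := eventually_codiscrete_order_eq_zero hD hconn hf
  have hcountable : {z | order f z = 0}ᶜ.Countable :=
    (HereditarilyLindelofSpace.isLindelof _).countable_of_isDiscrete (mem_codiscrete'.1 hzero).2
  obtain ⟨κ, hκ⟩ := countable_iff_exists_injOn.1 hcountable
  have htop (z : D) : order f z ≠ ⊤ := mt (order_eq_top_iff hD hconn).1 hf
  obtain ⟨h, hh⟩ := exists_order_eq hD (k := fun z ↦ κ z * (order f z).toNat) <| by
    filter_upwards [hzero] with z hz
    simp [hz]
  have horder (z : D) : order h z = κ z * order f z := by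
    rw [hh, Nat.cast_mul, ENat.natCast_toNat (htop z)]
  refine ⟨h, ?_, fun n ↦ Finite.of_injOn (f := κ) (t := Iio n) ?_ (hκ.mono ?_) (finite_Iio n)⟩
  · rintro rfl
    obtain ⟨z, -⟩ : ∃ z, (f : D → ℂ) z ≠ 0 := by
      by_contra! hall
      exact hf (Subtype.ext (funext hall))
    exact (hh z ▸ ENat.natCast_ne_top _) ((order_eq_top_iff hD hconn).2 rfl)
  · intro z hz
    rw [mem_ofPred_eq, horder] at hz
    exact Nat.cast_lt.1 (lt_of_mul_lt_mul_right' hz)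
  · intro z (hz : order h z < n * order f z) (hz₀ : order f z = 0)
    simp [hz₀] at hz

theorem exists_mem_order_le_of_forall_linear_notMem (hD : IsOpen D) (hconn : IsPreconnected D)
    {P : Ideal (Hol D)} (hP : P.IsPrime) (hlinear : ∀ ζ, linear ζ ∉ P) {f : Hol D} (hf : f ∈ P)
    (hf₀ : f ≠ 0) {E : Set D} (hE : E.Finite) :
    ∃ q ∈ P, (∀ z ∈ E, order q z = 0) ∧ ∀ z, order q z ≤ order f z := by
  induction E, hE using Set.Finite.induction_on with
  | empty => exact ⟨f, hf, by simp, fun _ ↦ le_rfl⟩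
  | @insert ζ E _ _ ih =>
    obtain ⟨g, hg, hgE, hgf⟩ := ih
    have hg₀ : g ≠ 0 := fun h ↦ hf₀ <| (order_eq_top_iff hD hconn (z := ζ)).1 <|
      top_le_iff.1 (((order_eq_top_iff hD hconn).2 h).ge.trans (hgf ζ))
    obtain ⟨n, q, rfl, hqζ⟩ := exists_eq_linear_pow_mul hD hconn hg₀ ζ
    have hq : q ∈ P := (hP.mem_or_mem hg).resolve_left fun h ↦ hlinear ζ (hP.mem_of_pow_mem n h)
    have hqg (z : D) : order q z ≤ order (linear ζ ^ n * q) z :=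
      (dvd_iff_forall_order_le hD).1 (dvd_mul_left q _) z
    refine ⟨q, hq, forall_mem_insert.2 ⟨(order_eq_zero_iff hD).2 hqζ,
      fun z hz ↦ ?_⟩, fun z ↦ (hqg z).trans (hgf z)⟩
    exact nonpos_iff_eq_zero.1 ((hqg z).trans_eq (hgE z hz))

theorem ki_ne_bot_of_forall_linear_notMem (hD : IsOpen D) (hconn : IsPreconnected D)
    {P : Ideal (Hol D)} (hP : P.IsPrime) (hP₀ : P ≠ ⊥) (hlinear : ∀ ζ, linear ζ ∉ P) :
    ki P ≠ ⊥ := by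
  obtain ⟨f, hf, hf₀⟩ := P.ne_bot_iff.1 hP₀
  obtain ⟨h, hh₀, hfin⟩ := exists_ne_zero_finite_order_lt_mul hD hconn hf₀
  refine (Submodule.ne_bot_iff _).2 ⟨h, mem_ki.2 fun n ↦ ?_, hh₀⟩
  obtain ⟨q, hq, hqE, hqf⟩ :=
    exists_mem_order_le_of_forall_linear_notMem hD hconn hP hlinear hf hf₀ (hfin n)
  refine (P ^ n).mem_of_dvd ((dvd_iff_forall_order_le hD).2 fun z ↦ ?_) (Ideal.pow_mem_pow hq n)
  rw [order_pow hD]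
  rcases lt_or_ge (order h z) (n * order f z) with hlt | hge
  · simp [hqE z hlt]
  · exact (mul_le_mul_right (hqf z) _).trans hge

end Free

end Hol

theorem ki_eq_bot_iff_fixed_maximal_general {D : Set ℂ} (hD : IsOpen D) (hconn : IsPreconnected D)
    {P : Ideal (Hol D)} (hP : P.IsPrime) (hP₀ : P ≠ ⊥) :
    ki P = ⊥ ↔ ∃ ζ : D, ∀ f : Hol D, f ∈ P ↔ (f : D → ℂ) ζ = 0 := by
  refine ⟨fun hki ↦ ?_, ?_⟩
  · obtain ⟨ζ, hζ⟩ : ∃ ζ, Hol.linear ζ ∈ P := by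
      by_contra! hlinear
      exact Hol.ki_ne_bot_of_forall_linear_notMem hD hconn hP hP₀ hlinear hki
    exact ⟨ζ, Hol.mem_iff_apply_eq_zero_of_linear_mem hD hP.ne_top hζ⟩
  · rintro ⟨ζ, hζ⟩
    have hspan : P = Ideal.span {Hol.linear ζ} := by
      ext f
      rw [hζ, Ideal.mem_span_singleton, Hol.linear_dvd_iff hD]
    rw [hspan, Hol.ki_span_linear hD hconn]

/-- Let `D` be a domain in `ℂ` and `M` a maximal ideal of `H(D)`. Then
`ki(M) = ⋂_{n=1}^∞ Mⁿ = {0}` if and only if there exists `ζ ∈ D` such that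
`M = {f ∈ H(D) : f(ζ) = 0}`. -/
theorem ki_eq_bot_iff_fixed_maximal {D : Set ℂ} (hD : IsOpen D) (hDconn : IsConnected D)
    (M : Ideal (Hol D)) (hM : M.IsMaximal) :
    ki M = ⊥ ↔ ∃ ζ : D, ∀ f : Hol D, f ∈ M ↔ (f : D → ℂ) ζ = 0 :=
  ki_eq_bot_iff_fixed_maximal_general hD hDconn.isPreconnected hM.isPrime
    (Hol.ne_bot_of_isMaximal hD hDconn hM)
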